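/- Goursat solution (equation (E14) solves (E11)). Define 𝒲(x, ξ) := ∑_{i=0}^m c_i Ψ_i(φ) Ψ_i(ϕ) T_{k_i}((r/ρ + ρ/r)/2) for x = (r cos φ, r sin φ) and ξ = (ρ cos ϕ, ρ sin ϕ). Then: (1) at all points with r > 0, ρ > 0, W(φ) ≠ 0 and W(ϕ) ≠ 0, one has −Δ_x 𝒲(x, ξ) + V_k(x)·𝒲(x, ξ) = 0, where Δ_x is the Laplacian in the variable x; and (2) 𝒲(x, x) = 1 whenever r > 0 and W(φ) ≠ 0. -/

import Mathlib

/-- The Wronskian of a family of `n` real functions: the determinant of the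
`n × n` matrix whose `(i, j)`-entry is the `j`-th derivative of the `i`-th function. -/
noncomputable def wronsk {n : ℕ} (f : Fin n → ℝ → ℝ) (t : ℝ) : ℝ :=
  (Matrix.of fun i j : Fin n => iteratedDeriv (j : ℕ) (f i) t).det

/-- The functions `χ_i(φ) = cos(k_i φ + θ_i)`. -/
noncomputable def chiF (m : ℕ) (k : Fin (m + 1) → ℤ) (θ : Fin (m + 1) → ℝ)
    (i : Fin (m + 1)) : ℝ → ℝ :=
  fun φ => Real.cos ((k i : ℝ) * φ + θ i)

/-- `W(φ) = Wr[χ_0, …, χ_m](φ)`. -/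
noncomputable def Wfn (m : ℕ) (k : Fin (m + 1) → ℤ) (θ : Fin (m + 1) → ℝ) : ℝ → ℝ :=
  wronsk (chiF m k θ)

/-- `Ψ_i(φ) = Wr[χ_0, …, χ_{i-1}, χ_{i+1}, …, χ_m](φ) / W(φ)`. -/
noncomputable def PsiF (m : ℕ) (k : Fin (m + 1) → ℤ) (θ : Fin (m + 1) → ℝ)
    (i : Fin (m + 1)) : ℝ → ℝ :=
  fun φ => wronsk (fun j : Fin m => chiF m k θ (i.succAbove j)) φ / Wfn m k θ φ

/-- `c_i = ∏_{j ≠ i} (k_i² − k_j²)`. -/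
noncomputable def cF (m : ℕ) (k : Fin (m + 1) → ℤ) (i : Fin (m + 1)) : ℝ :=
  ∏ j ∈ Finset.univ.erase i, ((k i : ℝ) ^ 2 - (k j : ℝ) ^ 2)

/-- The Hadamard coefficients `U_ν` in polar coordinates:
`U_ν = ((−2)^ν/(rρ)^ν) ∑_i c_i Ψ_i(φ) Ψ_i(ϕ) T_{k_i}^{(ν)}(cos(φ − ϕ))`. -/
noncomputable def Ucoef (m : ℕ) (k : Fin (m + 1) → ℤ) (θ : Fin (m + 1) → ℝ)
    (ν : ℕ) (r φ ρ ϕ : ℝ) : ℝ :=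
  ((-2 : ℝ) ^ ν / (r * ρ) ^ ν) *
    ∑ i, cF m k i * PsiF m k θ i φ * PsiF m k θ i ϕ *
      (Polynomial.derivative^[ν] (Polynomial.Chebyshev.T ℝ (k i))).eval (Real.cos (φ - ϕ))

/-- The potential `V_k` in polar coordinates: `V_k = −(2/r²)·(d²/dφ²) log W(φ)`. -/
noncomputable def Vpot (m : ℕ) (k : Fin (m + 1) → ℤ) (θ : Fin (m + 1) → ℝ)
    (r φ : ℝ) : ℝ :=
  -(2 / r ^ 2) * deriv (deriv fun t => Real.log (Wfn m k θ t)) φ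

/-- First partial derivative in the first variable. -/
noncomputable def pdx (f : ℝ × ℝ → ℝ) (x : ℝ × ℝ) : ℝ := deriv (fun s => f (s, x.2)) x.1

/-- First partial derivative in the second variable. -/
noncomputable def pdy (f : ℝ × ℝ → ℝ) (x : ℝ × ℝ) : ℝ := deriv (fun s => f (x.1, s)) x.2

/-- The Laplacian on `ℝ²`. -/
noncomputable def lap2 (f : ℝ × ℝ → ℝ) (x : ℝ × ℝ) : ℝ := pdx (pdx f) x + pdy (pdy f) x

/-!
The functions `Ψ_i` form, up to sign, the last row of the inverse of the Wronskian matrix of the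
`χ_i`, so that `∑ ±Ψ_i χ_i^(j)` is `0` for `j < m`, `1` for `j = m` and `(log W)'` for `j = m + 1`.
Differentiating these relations twice gives Crum's equation `Ψ_i'' = -(k_i² + 2 (log W)'') Ψ_i`.
On the other hand `T_n((r/ρ + ρ/r)/2) = cosh(n log(r/ρ))` is an eigenfunction of `(r ∂_r)²` for the
eigenvalue `n²`, so each summand of `𝒲` is annihilated by `-Δ + V_k`.

On the diagonal one needs `∑ c_i Ψ_i² = 1`. With `κ_i = k_i`, `x_i = k_i φ + θ_i` and `u_i = ±Ψ_i`,
the function `g(τ) = ∑ u_i cos(κ_i τ + x_i)` vanishes to order exactly `m` at `0`, and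
`g^(m)(0) = 1`. Its Laplace transform is therefore `z M(z) / ∏ (z² + κ_i²)` with `M` monic of degree
`m`; the factor `z` comes from `κ_0 = x_0 = 0`. The residues at the poles show that
`p(z) = (-1)^m M(-z)` satisfies `p(d/dt) cos(κ_i t + θ_i) = c_i u_i` at `t = φ`. Hence
`∑ c_i u_i² = ∑ u_i p(d/dt) cos(κ_i t + θ_i)` is the coefficient of degree `m` of `p`, which is `1`.
-/

section Wronskian

open scoped ContDiff Topology

lemma hasDerivAt_iteratedDeriv {𝕜 F : Type*} [NontriviallyNormedField 𝕜] [NormedAddCommGroup F]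
    [NormedSpace 𝕜 F] {g : 𝕜 → F} (hg : ContDiff 𝕜 ∞ g) (j : ℕ) (t : 𝕜) :
    HasDerivAt (iteratedDeriv j g) (iteratedDeriv (j + 1) g t) t := by
  rw [iteratedDeriv_succ]
  exact (hg.differentiable_iteratedDeriv j (mod_cast WithTop.coe_lt_top _) t).hasDerivAt

lemma deriv_deriv_eq_iteratedDeriv_two {𝕜 F : Type*} [NontriviallyNormedField 𝕜]
    [NormedAddCommGroup F] [NormedSpace 𝕜 F] (g : 𝕜 → F) : deriv (deriv g) = iteratedDeriv 2 g := by
  rw [iteratedDeriv_succ, iteratedDeriv_one]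

lemma differentiableAt_deriv {𝕜 F : Type*} [NontriviallyNormedField 𝕜] [NormedAddCommGroup F]
    [NormedSpace 𝕜 F] {g : 𝕜 → F} {t : 𝕜} (hg : ContDiffAt 𝕜 2 g t) :
    DifferentiableAt 𝕜 (deriv g) t := by
  have hfderiv : DifferentiableAt 𝕜 (fun s => fderiv 𝕜 g s 1) t :=
    ((hg.fderiv_right (m := 1) (by norm_num)).differentiableAt (by norm_num)).clm_apply
      (differentiableAt_const 1)
  simpa only [fderiv_apply_one_eq_deriv] using hfderiv

lemma hasDerivAt_det {𝕜 ι : Type*} [NontriviallyNormedField 𝕜] [Fintype ι] [DecidableEq ι]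
    {A : 𝕜 → Matrix ι ι 𝕜} {A' : Matrix ι ι 𝕜} {t : 𝕜}
    (hA : ∀ i j, HasDerivAt (fun s => A s i j) (A' i j) t) :
    HasDerivAt (fun s => (A s).det) (∑ j, ((A t).updateCol j (A'.col j)).det) t := by
  simp only [Matrix.det_apply]
  rw [Finset.sum_comm]
  refine HasDerivAt.fun_sum fun σ _ => ?_
  rw [← Finset.smul_sum]
  refine HasDerivAt.fun_const_smul _ ?_
  refine (HasDerivAt.fun_finsetProd fun j _ => hA (σ j) j).congr_deriv
    (Finset.sum_congr rfl fun j _ => ?_)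
  rw [← Finset.prod_erase_mul _ _ (Finset.mem_univ j), Matrix.updateCol_self, smul_eq_mul,
    Matrix.col_apply]
  congr 1
  exact Finset.prod_congr rfl fun l hl => by rw [Matrix.updateCol_ne (Finset.ne_of_mem_erase hl)]

/-- The matrix whose determinant is the Wronskian: row `i` is the jet of `f i` at `t`. -/
noncomputable def wronskMatrix {n : ℕ} (f : Fin n → ℝ → ℝ) (t : ℝ) : Matrix (Fin n) (Fin n) ℝ :=
  Matrix.of fun i j => iteratedDeriv (j : ℕ) (f i) t

lemma contDiff_wronsk {n : ℕ} {f : Fin n → ℝ → ℝ} (hf : ∀ i, ContDiff ℝ ∞ (f i)) :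
    ContDiff ℝ ∞ (wronsk f) := by
  unfold wronsk
  simp only [Matrix.det_apply, Matrix.of_apply, iteratedDeriv_eq_iterate]
  exact ContDiff.sum fun σ _ => ContDiff.const_smul _ <|
    contDiff_prod fun j _ => (hf (σ j)).iterate_deriv j

variable {n : ℕ} {f : Fin (n + 1) → ℝ → ℝ}

lemma hasDerivAt_wronsk (hf : ∀ i, ContDiff ℝ ∞ (f i)) (t : ℝ) :
    HasDerivAt (wronsk f) ((wronskMatrix f t).updateCol (Fin.last n)
      fun i => iteratedDeriv (n + 1) (f i) t).det t := by
  refine (hasDerivAt_det (A := wronskMatrix f)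
    (A' := Matrix.of fun i j => iteratedDeriv (j + 1) (f i) t)
    fun i j => hasDerivAt_iteratedDeriv (hf i) j t).congr_deriv ?_
  refine Finset.sum_eq_single_of_mem _ (Finset.mem_univ _) fun j _ hj => ?_
  obtain ⟨l, rfl⟩ := Fin.exists_castSucc_eq.2 hj
  -- differentiating any column but the last one duplicates the next column
  refine Matrix.det_zero_of_column_eq l.castSucc_lt_succ.ne fun i => ?_
  rw [Matrix.updateCol_self, Matrix.updateCol_ne l.castSucc_lt_succ.ne']
  simp only [wronskMatrix, Matrix.col_apply, Matrix.of_apply, Fin.val_castSucc, Fin.val_succ]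

/-- The last row of the inverse of `wronskMatrix f t`, written by cofactors: the family dual to `f`
for the pairing `∑ i, u i * f i`, and up to sign the functions `Ψ_i`. -/
noncomputable def wronskDual (f : Fin (n + 1) → ℝ → ℝ) (i : Fin (n + 1)) : ℝ → ℝ :=
  fun t => (-1) ^ ((i : ℕ) + n) * (wronsk (fun j => f (i.succAbove j)) t / wronsk f t)

lemma contDiffAt_wronskDual (hf : ∀ i, ContDiff ℝ ∞ (f i)) {t : ℝ} (hW : wronsk f t ≠ 0)
    (i : Fin (n + 1)) : ContDiffAt ℝ ∞ (wronskDual f i) t :=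
  contDiffAt_const.mul <|
    (contDiff_wronsk fun j => hf (i.succAbove j)).contDiffAt.div (contDiff_wronsk hf).contDiffAt hW

lemma eventually_wronsk_ne_zero (hf : ∀ i, ContDiff ℝ ∞ (f i)) {t : ℝ} (hW : wronsk f t ≠ 0) :
    ∀ᶠ s in 𝓝 t, wronsk f s ≠ 0 :=
  (contDiff_wronsk hf).continuous.continuousAt.eventually_ne hW

lemma sum_wronskDual_mul (f : Fin (n + 1) → ℝ → ℝ) (t : ℝ) (b : Fin (n + 1) → ℝ) :
    ∑ i, wronskDual f i t * b i =
      ((wronskMatrix f t).updateCol (Fin.last n) b).det / wronsk f t := by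
  rw [Matrix.det_succ_column _ (Fin.last n), Finset.sum_div]
  refine Finset.sum_congr rfl fun i _ => ?_
  have hminor : wronsk (fun j => f (i.succAbove j)) t =
      ((wronskMatrix f t).submatrix i.succAbove (Fin.last n).succAbove).det := by
    simp only [wronsk, wronskMatrix, Fin.succAbove_last]
    rfl
  rw [wronskDual, hminor, Matrix.updateCol_self, Matrix.submatrix_updateCol_succAbove, Fin.val_last]
  ring

/-- The pairing `∑ i, u i * (f i)^(j)` of a family of coefficients with the `j`-th derivatives
of `f`. -/
noncomputable def jetPairing {ι : Type*} [Fintype ι] (u f : ι → ℝ → ℝ) (j : ℕ) (t : ℝ) : ℝ :=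
  ∑ i, u i t * iteratedDeriv j (f i) t

lemma hasDerivAt_jetPairing {ι : Type*} [Fintype ι] {u f : ι → ℝ → ℝ}
    (hf : ∀ i, ContDiff ℝ ∞ (f i)) {t : ℝ} (hu : ∀ i, DifferentiableAt ℝ (u i) t) (j : ℕ) :
    HasDerivAt (jetPairing u f j)
      (jetPairing (fun i => deriv (u i)) f j t + jetPairing u f (j + 1) t) t := by
  simp only [jetPairing, ← Finset.sum_add_distrib]
  exact HasDerivAt.fun_sum fun i _ => (hu i).hasDerivAt.mul (hasDerivAt_iteratedDeriv (hf i) j t)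

-- Differentiate `∑ u f^(j) = const` twice: first `∑ u' f^(j) = -∑ u f^(j+1)`, then once more.
lemma jetPairing_deriv_deriv_of_eventually_const {ι : Type*} [Fintype ι] {u f : ι → ℝ → ℝ}
    (hf : ∀ i, ContDiff ℝ ∞ (f i)) {t : ℝ} (hu : ∀ i, ContDiffAt ℝ 2 (u i) t) {j : ℕ} {c : ℝ}
    (hc : ∀ᶠ s in 𝓝 t, jetPairing u f j s = c) :
    jetPairing (fun i => deriv (deriv (u i))) f j t =
      jetPairing u f (j + 2) t - 2 * deriv (jetPairing u f (j + 1)) t := by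
  have hdiff : ∀ᶠ s in 𝓝 t, ∀ i, DifferentiableAt ℝ (u i) s :=
    Filter.eventually_all.2 fun i =>
      ((hu i).eventually (by norm_num)).mono fun s hs => hs.differentiableAt (by norm_num)
  have hfirst : (fun s => jetPairing (fun i => deriv (u i)) f j s) =ᶠ[𝓝 t]
      fun s => -jetPairing u f (j + 1) s := by
    filter_upwards [hdiff, hc.eventually_nhds] with s hs hcs
    have hzero : HasDerivAt (jetPairing u f j) 0 s :=
      (hasDerivAt_const s c).congr_of_eventuallyEq hcs
    linarith [(hasDerivAt_jetPairing hf hs j).unique hzero]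
  have hnext := hasDerivAt_jetPairing hf hdiff.self_of_nhds (j + 1)
  have hsecond := (hasDerivAt_jetPairing (u := fun i => deriv (u i)) hf
    (fun i => differentiableAt_deriv (hu i)) j).unique (hnext.neg.congr_of_eventuallyEq hfirst)
  rw [hnext.deriv]
  linarith

lemma jetPairing_wronskDual_of_lt (f : Fin (n + 1) → ℝ → ℝ) {j : ℕ} (hj : j < n) (t : ℝ) :
    jetPairing (wronskDual f) f j t = 0 := by
  have hne : (⟨j, by lia⟩ : Fin (n + 1)) ≠ Fin.last n := Fin.ne_of_val_ne hj.ne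
  rw [jetPairing, sum_wronskDual_mul, Matrix.det_zero_of_column_eq hne, zero_div]
  intro i
  rw [Matrix.updateCol_self, Matrix.updateCol_ne hne]
  rfl

lemma jetPairing_wronskDual_self {t : ℝ} (hW : wronsk f t ≠ 0) :
    jetPairing (wronskDual f) f n t = 1 := by
  have hcol : (fun i => iteratedDeriv n (f i) t) = fun i => wronskMatrix f t i (Fin.last n) := rfl
  rw [jetPairing, sum_wronskDual_mul, hcol, Matrix.updateCol_eq_self]
  exact div_self hW

lemma jetPairing_wronskDual_succ (hf : ∀ i, ContDiff ℝ ∞ (f i)) {t : ℝ} (hW : wronsk f t ≠ 0) :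
    jetPairing (wronskDual f) f (n + 1) t = deriv (fun s => Real.log (wronsk f s)) t := by
  rw [jetPairing, sum_wronskDual_mul, ((hasDerivAt_wronsk hf t).log hW).deriv]

lemma eq_zero_of_sum_mul_iteratedDeriv_eq_zero {t : ℝ} (hW : wronsk f t ≠ 0)
    {v : Fin (n + 1) → ℝ} (hv : ∀ j ≤ n, ∑ i, v i * iteratedDeriv j (f i) t = 0) : v = 0 :=
  Matrix.eq_zero_of_vecMul_eq_zero (M := wronskMatrix f t) hW <|
    funext fun j => hv j j.is_le

lemma iteratedDeriv_add_two_of_deriv_deriv {𝕜 : Type*} [NontriviallyNormedField 𝕜] {g : 𝕜 → 𝕜}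
    {μ : 𝕜} (hg : deriv (deriv g) = fun s => -μ * g s) (j : ℕ) (t : 𝕜) :
    iteratedDeriv (j + 2) g t = -μ * iteratedDeriv j g t := by
  rw [iteratedDeriv_succ', iteratedDeriv_succ', hg, iteratedDeriv_const_mul_field]

lemma eventually_jetPairing_wronskDual_eq (hf : ∀ i, ContDiff ℝ ∞ (f i)) {t : ℝ}
    (hW : wronsk f t ≠ 0) {j : ℕ} (hj : j ≤ n) :
    ∀ᶠ s in 𝓝 t, jetPairing (wronskDual f) f j s = if j = n then 1 else 0 := by
  filter_upwards [eventually_wronsk_ne_zero hf hW] with s hs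
  split_ifs with h
  · rw [h, jetPairing_wronskDual_self hs]
  · exact jetPairing_wronskDual_of_lt f (lt_of_le_of_ne hj h) s

lemma deriv_jetPairing_wronskDual_succ (hf : ∀ i, ContDiff ℝ ∞ (f i)) {t : ℝ}
    (hW : wronsk f t ≠ 0) {j : ℕ} (hj : j ≤ n) :
    deriv (jetPairing (wronskDual f) f (j + 1)) t =
      deriv (deriv fun s => Real.log (wronsk f s)) t * jetPairing (wronskDual f) f j t := by
  rcases hj.lt_or_eq with h | rfl
  · rw [Filter.EventuallyEq.deriv_eq (f := fun _ => if j + 1 = n then 1 else 0)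
      (eventually_jetPairing_wronskDual_eq hf hW h), deriv_const,
      jetPairing_wronskDual_of_lt f h, mul_zero]
  · rw [jetPairing_wronskDual_self hW, mul_one]
    exact Filter.EventuallyEq.deriv_eq <|
      (eventually_wronsk_ne_zero hf hW).mono fun s hs => jetPairing_wronskDual_succ hf hs

/-- Crum's theorem. -/
theorem deriv_deriv_wronskDual (hf : ∀ i, ContDiff ℝ ∞ (f i)) {μ : Fin (n + 1) → ℝ}
    (hμ : ∀ i, deriv (deriv (f i)) = fun s => -μ i * f i s) {t : ℝ} (hW : wronsk f t ≠ 0)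
    (i : Fin (n + 1)) :
    deriv (deriv (wronskDual f i)) t =
      -μ i * wronskDual f i t -
        2 * deriv (deriv fun s => Real.log (wronsk f s)) t * wronskDual f i t := by
  set u := wronskDual f
  set g := deriv (deriv fun s => Real.log (wronsk f s)) t
  have hzero : (fun i => deriv (deriv (u i)) t + μ i * u i t + 2 * g * u i t) = 0 := by
    refine eq_zero_of_sum_mul_iteratedDeriv_eq_zero hW fun j hj => ?_
    have hsecond := jetPairing_deriv_deriv_of_eventually_const hf
      (fun i => (contDiffAt_wronskDual hf hW i).of_le ENat.LEInfty.out)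
      (eventually_jetPairing_wronskDual_eq hf hW hj)
    have hshift : jetPairing u f (j + 2) t = -∑ i, μ i * u i t * iteratedDeriv j (f i) t := by
      rw [jetPairing, ← Finset.sum_neg_distrib]
      refine Finset.sum_congr rfl fun i _ => ?_
      rw [iteratedDeriv_add_two_of_deriv_deriv (hμ i)]
      ring
    rw [hshift, deriv_jetPairing_wronskDual_succ hf hW hj] at hsecond
    simp only [add_mul, Finset.sum_add_distrib]
    simp only [jetPairing, Finset.mul_sum, mul_assoc] at hsecond ⊢
    linarith
  have hi : deriv (deriv (u i)) t + μ i * u i t + 2 * g * u i t = 0 := congrFun hzero i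
  linarith

end Wronskian

section PolarLaplacian

open scoped ContDiff Topology

lemma contDiffAt_of_comp_hasFDerivAt_equiv {𝕂 E F G : Type*} [RCLike 𝕂] [NormedAddCommGroup E]
    [NormedSpace 𝕂 E] [CompleteSpace E] [NormedAddCommGroup F] [NormedSpace 𝕂 F]
    [NormedAddCommGroup G] [NormedSpace 𝕂 G] {n : WithTop ℕ∞} (hn : n ≠ 0) {f : F → G} {g : E → F}
    {a : E} {g' : E ≃L[𝕂] F} (hg : ContDiffAt 𝕂 n g a) (hg' : HasFDerivAt g (g' : E →L[𝕂] F) a)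
    (hfg : ContDiffAt 𝕂 n (f ∘ g) a) : ContDiffAt 𝕂 n f (g a) := by
  have hright : ∀ᶠ y in 𝓝 (g a), g (hg.localInverse hg' hn y) = y :=
    (hg.hasStrictFDerivAt' hg' hn).eventually_right_inverse
  have hcomp : ContDiffAt 𝕂 n ((f ∘ g) ∘ hg.localInverse hg' hn) (g a) := by
    refine ContDiffAt.comp _ ?_ (hg.to_localInverse hg' hn)
    rwa [hg.localInverse_apply_image]
  exact hcomp.congr_of_eventuallyEq (hright.mono fun y hy => (congrArg f hy).symm)

lemma contDiffAt_of_comp_polarCoord_symm {n : WithTop ℕ∞} (hn : n ≠ 0) {f : ℝ × ℝ → ℝ}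
    {p : ℝ × ℝ} (hp : p.1 ≠ 0) (hf : ContDiffAt ℝ n (f ∘ polarCoord.symm) p) :
    ContDiffAt ℝ n f (polarCoord.symm p) := by
  have hdet : (fderivPolarCoordSymm p).det ≠ 0 := by rwa [det_fderivPolarCoordSymm]
  have hsmooth : ContDiff ℝ n fun q : ℝ × ℝ => (q.1 * Real.cos q.2, q.1 * Real.sin q.2) := by
    fun_prop
  refine contDiffAt_of_comp_hasFDerivAt_equiv hn
    (g' := (fderivPolarCoordSymm p).toContinuousLinearEquivOfDetNeZero hdet)
    hsmooth.contDiffAt ?_ hf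
  rw [ContinuousLinearMap.coe_toContinuousLinearEquivOfDetNeZero]
  exact hasFDerivAt_polarCoord_symm p

lemma deriv_deriv_comp {E F : Type*} [NormedAddCommGroup E] [NormedSpace ℝ E]
    [NormedAddCommGroup F] [NormedSpace ℝ F] {f : E → F} {γ γ' : ℝ → E} {γ'' : E} {s : ℝ}
    (hγ : ∀ t, HasDerivAt γ (γ' t) t) (hγ' : HasDerivAt γ' γ'' s) (hf : ContDiffAt ℝ 2 f (γ s)) :
    deriv (deriv fun t => f (γ t)) s =
      fderiv ℝ (fderiv ℝ f) (γ s) (γ' s) (γ' s) + fderiv ℝ f (γ s) γ'' := by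
  have hfirst : deriv (fun t => f (γ t)) =ᶠ[𝓝 s] fun t => fderiv ℝ f (γ t) (γ' t) := by
    filter_upwards [(hγ s).continuousAt.eventually (hf.eventually (by norm_num))] with t ht
    exact ((ht.differentiableAt (by norm_num)).hasFDerivAt.comp_hasDerivAt t (hγ t)).deriv
  have hfderiv : DifferentiableAt ℝ (fderiv ℝ f) (γ s) :=
    (hf.fderiv_right (m := 1) (by norm_num)).differentiableAt (by norm_num)
  rw [hfirst.deriv_eq]
  exact ((hfderiv.hasFDerivAt.comp_hasDerivAt s (hγ s)).clm_apply hγ').deriv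

lemma bilin_apply_self_prod (H : ℝ × ℝ →L[ℝ] ℝ × ℝ →L[ℝ] ℝ) (a b : ℝ) :
    H (a, b) (a, b) = a ^ 2 * H (1, 0) (1, 0) + a * b * (H (1, 0) (0, 1) + H (0, 1) (1, 0)) +
      b ^ 2 * H (0, 1) (0, 1) := by
  have hab : ((a, b) : ℝ × ℝ) = a • (1, 0) + b • (0, 1) := by simp
  rw [hab]
  simp only [map_add, map_smul, add_apply, smul_apply, smul_eq_mul]
  ring

lemma lap2_eq_fderiv {f : ℝ × ℝ → ℝ} {x : ℝ × ℝ} (hf : ContDiffAt ℝ 2 f x) :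
    lap2 f x = fderiv ℝ (fderiv ℝ f) x (1, 0) (1, 0) + fderiv ℝ (fderiv ℝ f) x (0, 1) (0, 1) := by
  have hxx := deriv_deriv_comp (γ := fun s => (s, x.2)) (s := x.1)
    (fun t => (hasDerivAt_id t).prodMk (hasDerivAt_const t x.2)) (hasDerivAt_const _ _) hf
  have hyy := deriv_deriv_comp (γ := fun s => (x.1, s)) (s := x.2)
    (fun t => (hasDerivAt_const t x.1).prodMk (hasDerivAt_id t)) (hasDerivAt_const _ _) hf
  rw [map_zero, add_zero] at hxx hyy
  exact congrArg₂ (· + ·) hxx hyy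

lemma lap2_polarCoord_symm {f : ℝ × ℝ → ℝ} {r φ : ℝ} (hr : r ≠ 0)
    (hf : ContDiffAt ℝ 2 f (polarCoord.symm (r, φ))) :
    lap2 f (polarCoord.symm (r, φ)) =
      deriv (deriv fun s => f (polarCoord.symm (s, φ))) r +
        deriv (fun s => f (polarCoord.symm (s, φ))) r / r +
          deriv (deriv fun t => f (polarCoord.symm (r, t))) φ / r ^ 2 := by
  have hray (s : ℝ) : HasDerivAt (fun s => polarCoord.symm (s, φ)) (Real.cos φ, Real.sin φ) s := by
    simpa using ((hasDerivAt_id s).mul_const (Real.cos φ)).prodMk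
      ((hasDerivAt_id s).mul_const (Real.sin φ))
  have hcircle (t : ℝ) : HasDerivAt (fun t => polarCoord.symm (r, t))
      (r * -Real.sin t, r * Real.cos t) t :=
    ((Real.hasDerivAt_cos t).const_mul r).prodMk ((Real.hasDerivAt_sin t).const_mul r)
  have hcircle' : HasDerivAt (fun t => (r * -Real.sin t, r * Real.cos t))
      (-r • (Real.cos φ, Real.sin φ)) φ := by
    simpa using ((Real.hasDerivAt_sin φ).neg.const_mul r).prodMk
      ((Real.hasDerivAt_cos φ).const_mul r)
  have hradial : deriv (fun s => f (polarCoord.symm (s, φ))) r =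
      fderiv ℝ f (polarCoord.symm (r, φ)) (Real.cos φ, Real.sin φ) :=
    ((hf.differentiableAt (by norm_num)).hasFDerivAt.comp_hasDerivAt r (hray r)).deriv
  rw [lap2_eq_fderiv hf, deriv_deriv_comp hray (hasDerivAt_const _ _) hf, hradial,
    deriv_deriv_comp hcircle hcircle' hf, map_zero, map_smul, smul_eq_mul,
    bilin_apply_self_prod _ (Real.cos φ), bilin_apply_self_prod _ (r * -Real.sin φ)]
  set H := fderiv ℝ (fderiv ℝ f) (polarCoord.symm (r, φ))
  field_simp
  linear_combination -(r * (H (1, 0) (1, 0) + H (0, 1) (0, 1))) * Real.cos_sq_add_sin_sq φ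

lemma deriv_deriv_sum_const_mul {𝕜 ι : Type*} [NontriviallyNormedField 𝕜] [Fintype ι]
    {g : ι → 𝕜 → 𝕜} {t : 𝕜} (hg : ∀ i, ContDiffAt 𝕜 2 (g i) t) (c : ι → 𝕜) :
    deriv (deriv fun s => ∑ i, c i * g i s) t = ∑ i, c i * deriv (deriv (g i)) t := by
  simp only [deriv_deriv_eq_iteratedDeriv_two]
  rw [iteratedDeriv_fun_sum fun i _ => contDiffAt_const.mul (hg i)]
  exact Finset.sum_congr rfl fun i _ => iteratedDeriv_const_mul_field (c i) (g i)

lemma lap2_of_separated {ι : Type*} [Fintype ι] {f : ℝ × ℝ → ℝ} {ψ τ : ι → ℝ → ℝ} {r φ : ℝ}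
    (hr : r ≠ 0) (hψ : ∀ i, ContDiffAt ℝ 2 (ψ i) φ) (hτ : ∀ i, ContDiffAt ℝ 2 (τ i) r)
    (hf : ∀ᶠ p in 𝓝 (r, φ), f (polarCoord.symm p) = ∑ i, ψ i p.2 * τ i p.1) :
    lap2 f (polarCoord.symm (r, φ)) =
      ∑ i, (ψ i φ * (deriv (deriv (τ i)) r + deriv (τ i) r / r) +
        τ i r * deriv (deriv (ψ i)) φ / r ^ 2) := by
  have hsmooth : ContDiffAt ℝ 2 (f ∘ polarCoord.symm) (r, φ) := by
    refine ContDiffAt.congr_of_eventuallyEq (ContDiffAt.sum fun i _ => ?_) hf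
    exact ((hψ i).comp (r, φ) contDiffAt_snd).mul ((hτ i).comp (r, φ) contDiffAt_fst)
  have hray : (fun s => f (polarCoord.symm (s, φ))) =ᶠ[𝓝 r] fun s => ∑ i, ψ i φ * τ i s :=
    (Continuous.prodMk_left φ).continuousAt.eventually hf
  have hcircle : (fun t => f (polarCoord.symm (r, t))) =ᶠ[𝓝 φ] fun t => ∑ i, τ i r * ψ i t :=
    ((Continuous.prodMk_right r).continuousAt.eventually hf).mono fun t ht =>
      ht.trans (Finset.sum_congr rfl fun i _ => mul_comm _ _)
  rw [lap2_polarCoord_symm hr (contDiffAt_of_comp_polarCoord_symm two_ne_zero hr hsmooth),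
    hray.deriv.deriv_eq, hray.deriv_eq, hcircle.deriv.deriv_eq, deriv_deriv_sum_const_mul hτ,
    deriv_deriv_sum_const_mul hψ,
    deriv_fun_sum fun i _ => ((hτ i).differentiableAt (by norm_num)).const_mul (ψ i φ)]
  simp only [deriv_const_mul_field, Finset.sum_div, ← Finset.sum_add_distrib]
  exact Finset.sum_congr rfl fun i _ => by ring

lemma eval_chebyshev_T_eq_cosh (n : ℤ) {r ρ : ℝ} (hr : 0 < r) (hρ : 0 < ρ) :
    (Polynomial.Chebyshev.T ℝ n).eval ((r / ρ + ρ / r) / 2) =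
      Real.cosh (n * Real.log (r / ρ)) := by
  rw [← Polynomial.Chebyshev.T_real_cosh, Real.cosh_log (div_pos hr hρ), inv_div]

lemma contDiffAt_cosh_mul_log (κ : ℝ) {r ρ : ℝ} (hr : r ≠ 0) (hρ : ρ ≠ 0) :
    ContDiffAt ℝ 2 (fun s => Real.cosh (κ * Real.log (s / ρ))) r :=
  (contDiffAt_const.mul ((contDiffAt_id.div_const ρ).log (div_ne_zero hr hρ))).cosh

lemma euler_cosh_mul_log (κ : ℝ) {r ρ : ℝ} (hr : r ≠ 0) (hρ : ρ ≠ 0) :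
    deriv (deriv fun s => Real.cosh (κ * Real.log (s / ρ))) r +
      deriv (fun s => Real.cosh (κ * Real.log (s / ρ))) r / r =
        κ ^ 2 * Real.cosh (κ * Real.log (r / ρ)) / r ^ 2 := by
  have hlog {s : ℝ} (hs : s ≠ 0) : HasDerivAt (fun s => κ * Real.log (s / ρ)) (κ / s) s := by
    refine ((((hasDerivAt_id s).div_const ρ).log (div_ne_zero hs hρ)).const_mul κ).congr_deriv ?_
    simp only [id_eq]
    field_simp
  have hfirst : ∀ᶠ s in 𝓝 r, deriv (fun s => Real.cosh (κ * Real.log (s / ρ))) s =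
      Real.sinh (κ * Real.log (s / ρ)) * (κ / s) :=
    (eventually_ne_nhds hr).mono fun s hs => (hlog hs).cosh.deriv
  have hsecond := (hlog hr).sinh.mul ((hasDerivAt_const r κ).div (hasDerivAt_id r) hr)
  rw [hfirst.self_of_nhds, Filter.EventuallyEq.deriv_eq hfirst]
  refine (congrArg (· + _) hsecond.deriv).trans ?_
  simp only [Pi.div_apply, id_eq]
  field_simp
  ring

end PolarLaplacian

section TrigonometricSymbol

open Polynomial

/-- The value at phase `x = κ t + θ` of `p(d/dt) cos(κ t + θ)`, as a linear functional of the
constant-coefficient operator `p`; since `cos(κ t + θ) = Re e^{i(κ t + θ)}`, it is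
`Re (p(iκ) e^{ix})`. -/
noncomputable def cosSymbol (κ x : ℝ) : ℝ[X] →ₗ[ℝ] ℝ :=
  Complex.reLm ∘ₗ LinearMap.mulRight ℝ (Complex.exp (x * Complex.I)) ∘ₗ
    (aeval (κ * Complex.I)).toLinearMap

lemma cosSymbol_apply (κ x : ℝ) (p : ℝ[X]) :
    cosSymbol κ x p = (aeval (κ * Complex.I) p * Complex.exp (x * Complex.I)).re :=
  rfl

lemma cosSymbol_one (κ x : ℝ) : cosSymbol κ x 1 = Real.cos x := by
  rw [cosSymbol_apply, map_one, one_mul, Complex.exp_ofReal_mul_I_re]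

lemma cosSymbol_X (κ x : ℝ) : cosSymbol κ x X = -(κ * Real.sin x) := by
  simp [cosSymbol_apply, Complex.exp_ofReal_mul_I_im]

lemma cosSymbol_X_sq_mul (κ x : ℝ) (p : ℝ[X]) :
    cosSymbol κ x (X ^ 2 * p) = -κ ^ 2 * cosSymbol κ x p := by
  have hsq : aeval (κ * Complex.I) (X ^ 2 * p) = ((-κ ^ 2 : ℝ) : ℂ) * aeval (κ * Complex.I) p := by
    simp [mul_pow]
  rw [cosSymbol_apply, hsq, mul_assoc, Complex.re_ofReal_mul, cosSymbol_apply]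

lemma hasDerivAt_cosSymbol (κ θ : ℝ) (p : ℝ[X]) (t : ℝ) :
    HasDerivAt (fun s => cosSymbol κ (κ * s + θ) p) (cosSymbol κ (κ * t + θ) (X * p)) t := by
  have hphase : HasDerivAt (fun s : ℝ => ((κ * s + θ : ℝ) : ℂ) * Complex.I) (κ * Complex.I) t := by
    simpa using (((hasDerivAt_id t).const_mul κ).add_const θ).ofReal_comp.mul_const Complex.I
  have hexp := hphase.cexp.const_mul (aeval (κ * Complex.I) p)
  refine (Complex.reCLM.hasFDerivAt.comp_hasDerivAt t hexp).congr_deriv ?_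
  rw [cosSymbol_apply, map_mul (aeval _), aeval_X, Complex.reCLM_apply]
  ring_nf

lemma iteratedDeriv_cos_linear (κ θ : ℝ) (j : ℕ) :
    iteratedDeriv j (fun s => Real.cos (κ * s + θ)) =
      fun s => cosSymbol κ (κ * s + θ) (X ^ j) := by
  induction j with
  | zero => simp only [iteratedDeriv_zero, pow_zero, cosSymbol_one]
  | succ j ih =>
    rw [iteratedDeriv_succ, ih]
    funext t
    rw [(hasDerivAt_cosSymbol κ θ (X ^ j) t).deriv, ← pow_succ']

lemma sum_mul_cosSymbol_eq_coeff {ι : Type*} {s : Finset ι} {κ x u : ι → ℝ} {m : ℕ}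
    (hmom : ∀ j ≤ m, ∑ i ∈ s, u i * cosSymbol (κ i) (x i) (X ^ j) = if j = m then 1 else 0)
    {p : ℝ[X]} (hp : p.natDegree ≤ m) :
    ∑ i ∈ s, u i * cosSymbol (κ i) (x i) p = p.coeff m := by
  have hexpand (i : ι) : u i * cosSymbol (κ i) (x i) p =
      ∑ j ∈ Finset.range (m + 1), p.coeff j * (u i * cosSymbol (κ i) (x i) (X ^ j)) := by
    conv_lhs => rw [p.as_sum_range_C_mul_X_pow' (Nat.lt_succ_of_le hp)]
    simp only [map_sum, ← smul_eq_C_mul, map_smul, smul_eq_mul, Finset.mul_sum, mul_left_comm]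
  simp only [hexpand]
  rw [Finset.sum_comm]
  simp only [← Finset.mul_sum]
  rw [Finset.sum_congr rfl fun j hj => by rw [hmom j (Finset.mem_range_succ_iff.1 hj)]]
  simp

variable {ι : Type*} [DecidableEq ι]

/-- The numerator, over the common denominator `∏_{i ∈ s} (X² + κ_i²)`, of the Laplace transform
of the `n`-th derivative of `τ ↦ ∑_{i ∈ s} u_i cos(κ_i τ + x_i)`. -/
noncomputable def laplaceNumerator (s : Finset ι) (κ x u : ι → ℝ) (n : ℕ) : ℝ[X] :=
  ∑ i ∈ s, C (u i) *
    (C (cosSymbol (κ i) (x i) (X ^ n)) * X + C (cosSymbol (κ i) (x i) (X ^ (n + 1)))) *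
      ∏ j ∈ s.erase i, (X ^ 2 + C (κ j ^ 2))

-- This is the Laplace transform rule `ℒ(g') = z ℒ(g) - g(0)`.
lemma X_mul_laplaceNumerator (s : Finset ι) (κ x u : ι → ℝ) (n : ℕ) :
    X * laplaceNumerator s κ x u n =
      C (∑ i ∈ s, u i * cosSymbol (κ i) (x i) (X ^ n)) * ∏ j ∈ s, (X ^ 2 + C (κ j ^ 2)) +
        laplaceNumerator s κ x u (n + 1) := by
  simp only [laplaceNumerator, map_sum, Finset.mul_sum, Finset.sum_mul, ← Finset.sum_add_distrib]
  refine Finset.sum_congr rfl fun i hi => ?_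
  rw [← Finset.mul_prod_erase s _ hi, show n + 1 + 1 = 2 + n by ring, pow_add X 2 n,
    cosSymbol_X_sq_mul]
  simp only [map_mul, map_neg]
  ring

lemma degree_laplaceNumerator_lt (s : Finset ι) (κ x u : ι → ℝ) (n : ℕ) :
    (laplaceNumerator s κ x u n).degree < (2 * s.card : ℕ) := by
  refine mem_degreeLT.1 (Submodule.sum_mem _ fun i hi => mem_degreeLT.2 ?_)
  have hprod : (∏ j ∈ s.erase i, (X ^ 2 + C (κ j ^ 2))).natDegree = (s.card - 1) * 2 := by
    rw [natDegree_prod_of_monic _ _ fun j _ => monic_X_pow_add_C _ two_ne_zero]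
    simp only [natDegree_X_pow_add_C, Finset.sum_const, Finset.card_erase_of_mem hi, smul_eq_mul]
  have hlin := natDegree_linear_le (a := cosSymbol (κ i) (x i) (X ^ n))
    (b := cosSymbol (κ i) (x i) (X ^ (n + 1)))
  have hterm := natDegree_mul_le_of_le ((natDegree_C_mul_le (u i) _).trans hlin) hprod.le
  have hpos := Finset.card_pos.2 ⟨i, hi⟩
  exact (degree_le_of_natDegree_le hterm).trans_lt (Nat.cast_lt.2 (by lia))

lemma X_pow_mul_laplaceNumerator {s : Finset ι} {κ x u : ι → ℝ} {n : ℕ}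
    (hmom : ∀ j < n, ∑ i ∈ s, u i * cosSymbol (κ i) (x i) (X ^ j) = 0) :
    X ^ n * laplaceNumerator s κ x u 0 = laplaceNumerator s κ x u n := by
  induction n with
  | zero => rw [pow_zero, one_mul]
  | succ n ih =>
    rw [pow_succ', mul_assoc, ih fun j hj => hmom j (hj.trans n.lt_succ_self),
      X_mul_laplaceNumerator, hmom n n.lt_succ_self, map_zero, zero_mul, zero_add]

-- The Laplace transform of a function vanishing to order exactly `m` at `0` decays like `z⁻⁽ᵐ⁺¹⁾`.
lemma monic_laplaceNumerator {s : Finset ι} {κ x u : ι → ℝ} {m : ℕ}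
    (hmom : ∀ j ≤ m, ∑ i ∈ s, u i * cosSymbol (κ i) (x i) (X ^ j) = if j = m then 1 else 0) :
    (laplaceNumerator s κ x u 0).Monic ∧
      (laplaceNumerator s κ x u 0).natDegree + (m + 1) = 2 * s.card := by
  have hprod : (∏ j ∈ s, (X ^ 2 + C (κ j ^ 2))).Monic :=
    monic_prod_of_monic _ _ fun j _ => monic_X_pow_add_C _ two_ne_zero
  have hdeg : (∏ j ∈ s, (X ^ 2 + C (κ j ^ 2))).natDegree = 2 * s.card := by
    rw [natDegree_prod_of_monic _ _ fun j _ => monic_X_pow_add_C _ two_ne_zero]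
    simp only [natDegree_X_pow_add_C, Finset.sum_const, smul_eq_mul, mul_comm]
  have hlt : (laplaceNumerator s κ x u (m + 1)).degree <
      (∏ j ∈ s, (X ^ 2 + C (κ j ^ 2))).degree := by
    rw [degree_eq_natDegree hprod.ne_zero, hdeg]
    exact degree_laplaceNumerator_lt s κ x u (m + 1)
  have hshift : X ^ (m + 1) * laplaceNumerator s κ x u 0 =
      ∏ j ∈ s, (X ^ 2 + C (κ j ^ 2)) + laplaceNumerator s κ x u (m + 1) := by
    rw [pow_succ', mul_assoc, X_pow_mul_laplaceNumerator fun j hj => by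
      rw [hmom j hj.le, if_neg hj.ne], X_mul_laplaceNumerator, hmom m le_rfl, if_pos rfl, map_one,
      one_mul]
  have hmonic : (laplaceNumerator s κ x u 0).Monic :=
    (monic_X_pow (m + 1)).of_mul_monic_left (hshift ▸ hprod.add_of_left hlt)
  refine ⟨hmonic, ?_⟩
  rw [← hdeg, ← natDegree_add_eq_left_of_degree_lt hlt, ← hshift,
    (monic_X_pow (m + 1)).natDegree_mul hmonic, natDegree_X_pow, add_comm]

lemma aeval_laplaceNumerator {s : Finset ι} (κ x u : ι → ℝ) {i : ι} (hi : i ∈ s) :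
    aeval (-(κ i * Complex.I)) (laplaceNumerator s κ x u 0) =
      -(κ i * Complex.I) * (u i * Complex.exp (-x i * Complex.I)) *
        ∏ j ∈ s.erase i, ((κ j : ℂ) ^ 2 - (κ i : ℂ) ^ 2) := by
  have hsq : (-((κ i : ℂ) * Complex.I)) ^ 2 = -(κ i : ℂ) ^ 2 := by
    rw [neg_sq, mul_pow, Complex.I_sq, mul_neg_one]
  have hfactor (j : ι) : aeval (-((κ i : ℂ) * Complex.I)) (X ^ 2 + C (κ j ^ 2)) =
      (κ j : ℂ) ^ 2 - (κ i : ℂ) ^ 2 := by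
    simp only [map_add, map_pow, aeval_X, aeval_C, Complex.coe_algebraMap, hsq]
    ring
  rw [laplaceNumerator, map_sum, Finset.sum_eq_single_of_mem i hi fun l _ hl => by
    rw [map_mul, map_prod, Finset.prod_eq_zero (Finset.mem_erase.2 ⟨hl.symm, hi⟩)
      ((hfactor i).trans (sub_self _)), mul_zero]]
  simp only [map_mul, map_add, map_prod, hfactor, aeval_X, aeval_C, Complex.coe_algebraMap,
    zero_add, pow_zero, pow_one, cosSymbol_one, cosSymbol_X, Complex.exp_mul_I, Complex.cos_neg,
    Complex.sin_neg, Complex.ofReal_neg, Complex.ofReal_mul, Complex.ofReal_cos, Complex.ofReal_sin]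
  linear_combination (κ i * u i * Complex.sin (x i) *
    ∏ j ∈ s.erase i, ((κ j : ℂ) ^ 2 - (κ i : ℂ) ^ 2)) * (-1) * Complex.I_sq

/-- The quotient `laplaceNumerator s κ x u 0 / X` when `o ∈ s` is an index of zero frequency and
zero phase; dividing by `X` keeps the value at the root `κ o = 0` visible. -/
noncomputable def reducedNumerator (s : Finset ι) (o : ι) (κ x u : ι → ℝ) : ℝ[X] :=
  C (u o) * ∏ j ∈ s.erase o, (X ^ 2 + C (κ j ^ 2)) + X * laplaceNumerator (s.erase o) κ x u 0

lemma X_mul_reducedNumerator {s : Finset ι} {o : ι} (ho : o ∈ s) {κ x : ι → ℝ} (hκ : κ o = 0)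
    (hx : x o = 0) (u : ι → ℝ) :
    X * reducedNumerator s o κ x u = laplaceNumerator s κ x u 0 := by
  rw [laplaceNumerator, ← Finset.add_sum_erase _ _ ho, reducedNumerator, laplaceNumerator, mul_add]
  congr 1
  · simp only [hκ, hx, pow_zero, zero_add, pow_one, cosSymbol_one, cosSymbol_X, Real.cos_zero,
      zero_mul, neg_zero, map_one, map_zero, one_mul, add_zero]
    ring
  · rw [← mul_assoc, Finset.mul_sum]
    refine Finset.sum_congr rfl fun i hi => ?_
    rw [← Finset.mul_prod_erase (s.erase i) _
      (Finset.mem_erase.2 ⟨(Finset.ne_of_mem_erase hi).symm, ho⟩), Finset.erase_right_comm, hκ]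
    simp only [zero_pow two_ne_zero, map_zero, add_zero]
    ring

lemma aeval_reducedNumerator {s : Finset ι} {o : ι} (ho : o ∈ s) {κ x : ι → ℝ} (hκ : κ o = 0)
    (hx : x o = 0) (u : ι → ℝ) {i : ι} (hi : i ∈ s) :
    aeval (-(κ i * Complex.I)) (reducedNumerator s o κ x u) =
      u i * Complex.exp (-x i * Complex.I) *
        ∏ j ∈ s.erase i, ((κ j : ℂ) ^ 2 - (κ i : ℂ) ^ 2) := by
  rcases eq_or_ne i o with rfl | hio
  · simp [reducedNumerator, hκ, hx]
  · have hi' : i ∈ s.erase o := Finset.mem_erase.2 ⟨hio, hi⟩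
    have ho' : o ∈ s.erase i := Finset.mem_erase.2 ⟨hio.symm, ho⟩
    have hroot : aeval (-((κ i : ℂ) * Complex.I)) (X ^ 2 + C (κ i ^ 2)) = 0 := by
      simp [mul_pow]
    rw [reducedNumerator, map_add, map_mul, map_mul, map_prod, Finset.prod_eq_zero hi' hroot,
      mul_zero, zero_add, aeval_X, aeval_laplaceNumerator κ x u hi',
      ← Finset.mul_prod_erase (s.erase i) _ ho', Finset.erase_right_comm, hκ, Complex.ofReal_zero]
    linear_combination (u i * κ i ^ 2 * Complex.exp (-x i * Complex.I) *
      ∏ j ∈ (s.erase i).erase o, ((κ j : ℂ) ^ 2 - (κ i : ℂ) ^ 2)) * Complex.I_sq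

lemma cosSymbol_reducedNumerator_comp_neg_X {s : Finset ι} {o : ι} (ho : o ∈ s) {κ x : ι → ℝ}
    (hκ : κ o = 0) (hx : x o = 0) (u : ι → ℝ) {m : ℕ} (hcard : s.card = m + 1) {i : ι}
    (hi : i ∈ s) :
    cosSymbol (κ i) (x i) ((-1) ^ m * (reducedNumerator s o κ x u).comp (-X)) =
      (∏ j ∈ s.erase i, (κ i ^ 2 - κ j ^ 2)) * u i := by
  have hsign : (-1 : ℂ) ^ m * ∏ j ∈ s.erase i, ((κ j : ℂ) ^ 2 - (κ i : ℂ) ^ 2) =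
      ∏ j ∈ s.erase i, ((κ i : ℂ) ^ 2 - (κ j : ℂ) ^ 2) := by
    rw [← show (s.erase i).card = m by rw [Finset.card_erase_of_mem hi]; lia, ← Finset.prod_neg]
    simp only [neg_sub]
  have hexp : Complex.exp (-x i * Complex.I) * Complex.exp (x i * Complex.I) = 1 := by
    rw [← Complex.exp_add, neg_mul, neg_add_cancel, Complex.exp_zero]
  have hcomplex : aeval (κ i * Complex.I) ((-1) ^ m * (reducedNumerator s o κ x u).comp (-X)) *
      Complex.exp (x i * Complex.I) =
        (((∏ j ∈ s.erase i, (κ i ^ 2 - κ j ^ 2)) * u i : ℝ) : ℂ) := by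
    rw [map_mul, aeval_comp, map_neg, aeval_X, aeval_reducedNumerator ho hκ hx u hi]
    push_cast [map_pow, map_neg, map_one]
    rw [← hsign]
    linear_combination ((-1) ^ m * u i * ∏ j ∈ s.erase i, ((κ j : ℂ) ^ 2 - (κ i : ℂ) ^ 2)) * hexp
  rw [cosSymbol_apply, hcomplex, Complex.ofReal_re]

-- The left-hand side pairs `u` with `p(d/dt) cos(κ i * t + x i)` for the reflected numerator `p`,
-- which is monic of degree `m`; the moments then extract its leading coefficient.
theorem sum_mul_prod_sq_sub_sq_eq_one {s : Finset ι} {o : ι} (ho : o ∈ s) {κ x u : ι → ℝ}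
    (hκ : κ o = 0) (hx : x o = 0) {m : ℕ} (hcard : s.card = m + 1)
    (hmom : ∀ j ≤ m, ∑ i ∈ s, u i * cosSymbol (κ i) (x i) (X ^ j) = if j = m then 1 else 0) :
    ∑ i ∈ s, (∏ j ∈ s.erase i, (κ i ^ 2 - κ j ^ 2)) * u i ^ 2 = 1 := by
  obtain ⟨hmonic, hdeg⟩ := monic_laplaceNumerator hmom
  rw [← X_mul_reducedNumerator ho hκ hx] at hmonic hdeg
  set M := reducedNumerator s o κ x u
  have hM : M.Monic := monic_X.of_mul_monic_left hmonic
  have hMdeg : M.natDegree = m := by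
    rw [monic_X.natDegree_mul hM, natDegree_X] at hdeg
    lia
  set p := (-1) ^ m * M.comp (-X)
  have hp : p.Monic := by
    simpa only [hMdeg] using hM.neg_one_pow_natDegree_mul_comp_neg_X
  have hpdeg : p.natDegree = m := by
    rw [← hMdeg]
    refine natDegree_eq_of_degree_eq ?_
    rw [degree_mul, degree_pow, degree_neg, degree_one, nsmul_zero, zero_add, degree_comp_neg_X]
  calc ∑ i ∈ s, (∏ j ∈ s.erase i, (κ i ^ 2 - κ j ^ 2)) * u i ^ 2
      = ∑ i ∈ s, u i * cosSymbol (κ i) (x i) p := Finset.sum_congr rfl fun i hi => by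
        rw [cosSymbol_reducedNumerator_comp_neg_X ho hκ hx u hcard hi]; ring
    _ = p.coeff m := sum_mul_cosSymbol_eq_coeff hmom hpdeg.le
    _ = 1 := by rw [← hpdeg]; exact hp

end TrigonometricSymbol

section Goursat

open scoped ContDiff Topology

variable {m : ℕ} {k : Fin (m + 1) → ℤ} {θ : Fin (m + 1) → ℝ}

lemma contDiff_chiF (i : Fin (m + 1)) : ContDiff ℝ ∞ (chiF m k θ i) := by
  unfold chiF
  fun_prop

lemma deriv_deriv_chiF (i : Fin (m + 1)) :
    deriv (deriv (chiF m k θ i)) = fun s => -(k i : ℝ) ^ 2 * chiF m k θ i s := by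
  rw [deriv_deriv_eq_iteratedDeriv_two]
  unfold chiF
  rw [iteratedDeriv_cos_linear]
  funext s
  rw [← mul_one (Polynomial.X ^ 2), cosSymbol_X_sq_mul, cosSymbol_one]

lemma PsiF_eq_wronskDual (i : Fin (m + 1)) :
    PsiF m k θ i = fun s => (-1) ^ ((i : ℕ) + m) * wronskDual (chiF m k θ) i s := by
  funext s
  rw [wronskDual, ← mul_assoc, ← mul_pow, neg_one_mul, neg_neg, one_pow, one_mul]
  rfl

lemma contDiffAt_PsiF {φ : ℝ} (hW : Wfn m k θ φ ≠ 0) (i : Fin (m + 1)) :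
    ContDiffAt ℝ 2 (PsiF m k θ i) φ := by
  rw [PsiF_eq_wronskDual]
  exact contDiffAt_const.mul
    ((contDiffAt_wronskDual contDiff_chiF hW i).of_le ENat.LEInfty.out)

lemma deriv_deriv_PsiF {φ : ℝ} (hW : Wfn m k θ φ ≠ 0) (i : Fin (m + 1)) :
    deriv (deriv (PsiF m k θ i)) φ =
      (-(k i : ℝ) ^ 2 - 2 * deriv (deriv fun t => Real.log (Wfn m k θ t)) φ) *
        PsiF m k θ i φ := by
  simp only [PsiF_eq_wronskDual, deriv_const_mul_field']
  rw [deriv_deriv_wronskDual contDiff_chiF (μ := fun i => (k i : ℝ) ^ 2) deriv_deriv_chiF hW]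
  unfold Wfn
  ring

theorem lap2_eq_Vpot_mul {f : ℝ × ℝ → ℝ} {b : Fin (m + 1) → ℝ} {ρ : ℝ} (hρ : 0 < ρ)
    (hf : ∀ s t : ℝ, 0 < s → Wfn m k θ t ≠ 0 → f (s * Real.cos t, s * Real.sin t) =
      ∑ i, b i * PsiF m k θ i t *
        (Polynomial.Chebyshev.T ℝ (k i)).eval ((s / ρ + ρ / s) / 2))
    {r φ : ℝ} (hr : 0 < r) (hW : Wfn m k θ φ ≠ 0) :
    lap2 f (r * Real.cos φ, r * Real.sin φ) =
      Vpot m k θ r φ * f (r * Real.cos φ, r * Real.sin φ) := by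
  have hseparated {s t : ℝ} (hs : 0 < s) (ht : Wfn m k θ t ≠ 0) :
      f (s * Real.cos t, s * Real.sin t) =
        ∑ i, b i * PsiF m k θ i t * Real.cosh (k i * Real.log (s / ρ)) := by
    simp only [hf s t hs ht, eval_chebyshev_T_eq_cosh _ hs hρ]
  have hnear : ∀ᶠ p : ℝ × ℝ in 𝓝 (r, φ), f (polarCoord.symm p) =
      ∑ i, b i * PsiF m k θ i p.2 * Real.cosh (k i * Real.log (p.1 / ρ)) := by
    filter_upwards [continuousAt_fst.eventually (eventually_gt_nhds hr),
      continuousAt_snd.eventually (eventually_wronsk_ne_zero contDiff_chiF hW)] with p hp hWp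
    exact hseparated hp hWp
  have hlap := lap2_of_separated hr.ne' (fun i => contDiffAt_const.mul (contDiffAt_PsiF hW i))
    (fun i => contDiffAt_cosh_mul_log (k i) hr.ne' hρ.ne') hnear
  refine hlap.trans ?_
  rw [hseparated hr hW, Vpot, Finset.mul_sum]
  refine Finset.sum_congr rfl fun i _ => ?_
  simp only [deriv_const_mul_field']
  rw [euler_cosh_mul_log _ hr.ne' hρ.ne', deriv_deriv_PsiF hW]
  ring

theorem sum_cF_mul_PsiF_sq (hk0 : k 0 = 0) (hθ0 : θ 0 = 0) {φ : ℝ} (hW : Wfn m k θ φ ≠ 0) :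
    ∑ i, cF m k i * PsiF m k θ i φ ^ 2 = 1 := by
  have hsq (i : Fin (m + 1)) : PsiF m k θ i φ ^ 2 = wronskDual (chiF m k θ) i φ ^ 2 := by
    rw [PsiF_eq_wronskDual, mul_pow, ← pow_mul, pow_mul', neg_one_sq, one_pow, one_mul]
  have hmoment (j : ℕ) (hj : j ≤ m) : ∑ i, wronskDual (chiF m k θ) i φ *
      cosSymbol (k i) (k i * φ + θ i) (Polynomial.X ^ j) = if j = m then 1 else 0 := by
    rw [← (eventually_jetPairing_wronskDual_eq contDiff_chiF hW hj).self_of_nhds]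
    exact Finset.sum_congr rfl fun i _ =>
      congrArg (_ * ·) (congrFun (iteratedDeriv_cos_linear (k i) (θ i) j) φ).symm
  simp only [hsq, cF]
  exact sum_mul_prod_sq_sub_sq_eq_one (Finset.mem_univ 0) (κ := fun i => (k i : ℝ))
    (x := fun i => k i * φ + θ i) (by simp [hk0]) (by simp [hk0, hθ0])
    (by rw [Finset.card_univ, Fintype.card_fin]) hmoment

end Goursat

theorem goursat_solution_general (m : ℕ)
    (k : Fin (m + 1) → ℤ) (hk0 : k 0 = 0)
    (θ : Fin (m + 1) → ℝ) (hθ0 : θ 0 = 0)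
    (𝒲 : ℝ × ℝ → ℝ × ℝ → ℝ) (V : ℝ × ℝ → ℝ)
    (h𝒲 : ∀ (r φ ρ ϕ : ℝ), 0 < r → 0 < ρ →
      Wfn m k θ φ ≠ 0 → Wfn m k θ ϕ ≠ 0 →
      𝒲 (r * Real.cos φ, r * Real.sin φ) (ρ * Real.cos ϕ, ρ * Real.sin ϕ)
        = ∑ i, cF m k i * PsiF m k θ i φ * PsiF m k θ i ϕ *
            (Polynomial.Chebyshev.T ℝ (k i)).eval ((r / ρ + ρ / r) / 2))
    (hV : ∀ (r φ : ℝ), 0 < r → Wfn m k θ φ ≠ 0 →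
      V (r * Real.cos φ, r * Real.sin φ) = Vpot m k θ r φ) :
    (∀ (r φ ρ ϕ : ℝ), 0 < r → 0 < ρ → Wfn m k θ φ ≠ 0 → Wfn m k θ ϕ ≠ 0 →
      -lap2 (fun y => 𝒲 y (ρ * Real.cos ϕ, ρ * Real.sin ϕ))
          (r * Real.cos φ, r * Real.sin φ) +
        V (r * Real.cos φ, r * Real.sin φ) *
          𝒲 (r * Real.cos φ, r * Real.sin φ) (ρ * Real.cos ϕ, ρ * Real.sin ϕ) = 0) ∧
    (∀ (r φ : ℝ), 0 < r → Wfn m k θ φ ≠ 0 →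
      𝒲 (r * Real.cos φ, r * Real.sin φ) (r * Real.cos φ, r * Real.sin φ) = 1) := by
  constructor
  · intro r φ ρ ϕ hr hρ hφ hϕ
    have hlap := lap2_eq_Vpot_mul (f := fun y => 𝒲 y (ρ * Real.cos ϕ, ρ * Real.sin ϕ))
      (b := fun i => cF m k i * PsiF m k θ i ϕ) hρ (fun s t hs ht => by
        simp only [h𝒲 s t ρ ϕ hs hρ ht hϕ, mul_right_comm]) hr hφ
    rw [hlap, hV r φ hr hφ, neg_add_cancel]
  · intro r φ hr hφ
    have hone : (r / r + r / r) / 2 = 1 := by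
      rw [div_self hr.ne', add_self_div_two]
    simp only [h𝒲 r φ r φ hr hr hφ hφ, hone, Polynomial.Chebyshev.T_eval_one, mul_one, mul_assoc,
      ← sq]
    exact sum_cF_mul_PsiF_sq hk0 hθ0 hφ

/-- **Equation (E14) solves the Goursat problem (E11).** The function
`𝒲(x, ξ) = ∑_i c_i Ψ_i(φ) Ψ_i(ϕ) T_{k_i}((r/ρ + ρ/r)/2)` satisfies `ℒ[𝒲(·, ξ)] = 0`
and `𝒲(x, x) = 1`. -/
theorem goursat_solution (m : ℕ) (hm : 1 ≤ m)
    (k : Fin (m + 1) → ℤ) (hk0 : k 0 = 0) (hk : StrictMono k)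
    (θ : Fin (m + 1) → ℝ) (hθ0 : θ 0 = 0)
    (𝒲 : ℝ × ℝ → ℝ × ℝ → ℝ) (V : ℝ × ℝ → ℝ)
    (h𝒲 : ∀ (r φ ρ ϕ : ℝ), 0 < r → 0 < ρ →
      Wfn m k θ φ ≠ 0 → Wfn m k θ ϕ ≠ 0 →
      𝒲 (r * Real.cos φ, r * Real.sin φ) (ρ * Real.cos ϕ, ρ * Real.sin ϕ)
        = ∑ i, cF m k i * PsiF m k θ i φ * PsiF m k θ i ϕ *
            (Polynomial.Chebyshev.T ℝ (k i)).eval ((r / ρ + ρ / r) / 2))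
    (hV : ∀ (r φ : ℝ), 0 < r → Wfn m k θ φ ≠ 0 →
      V (r * Real.cos φ, r * Real.sin φ) = Vpot m k θ r φ) :
    (∀ (r φ ρ ϕ : ℝ), 0 < r → 0 < ρ → Wfn m k θ φ ≠ 0 → Wfn m k θ ϕ ≠ 0 →
      -lap2 (fun y => 𝒲 y (ρ * Real.cos ϕ, ρ * Real.sin ϕ))
          (r * Real.cos φ, r * Real.sin φ) +
        V (r * Real.cos φ, r * Real.sin φ) *
          𝒲 (r * Real.cos φ, r * Real.sin φ) (ρ * Real.cos ϕ, ρ * Real.sin ϕ) = 0) ∧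
    (∀ (r φ : ℝ), 0 < r → Wfn m k θ φ ≠ 0 →
      𝒲 (r * Real.cos φ, r * Real.sin φ) (r * Real.cos φ, r * Real.sin φ) = 1) :=
  goursat_solution_general m k hk0 θ hθ0 𝒲 V h𝒲 hV
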